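/- For every integer e ≥ 1 and general points: ℓ(L(9e, 9e−3, 6^{2e})) = 0 (with virtual dimension −6e − 3), and ℓ(L(9e+1, 9e−2, 6^{2e})) = 2 (with virtual dimension −6e + 1); in particular both systems are special. -/

import Mathlib

open MvPolynomial

/-- The iterated partial derivative corresponding to the multi-index `ν`. -/
noncomputable def mderiv (ν : Fin 3 → ℕ) :
    MvPolynomial (Fin 3) ℂ →ₗ[ℂ] MvPolynomial (Fin 3) ℂ :=
  ((pderiv (R := ℂ) (0 : Fin 3)).toLinearMap ^ ν 0) ∘ₗ
  ((pderiv (R := ℂ) (1 : Fin 3)).toLinearMap ^ ν 1) ∘ₗ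
  ((pderiv (R := ℂ) (2 : Fin 3)).toLinearMap ^ ν 2)

/-- The linear system `L(d; m)` of homogeneous forms of degree `d` in three variables
all of whose partial derivatives of order `< m i` vanish at the point `p i`,
i.e. plane curves of degree `d` with multiplicity at least `m i` at `p i`. -/
noncomputable def linSys {k : ℕ} (p : Fin k → Fin 3 → ℂ) (d : ℕ) (m : Fin k → ℕ) :
    Submodule ℂ (MvPolynomial (Fin 3) ℂ) :=
  (homogeneousSubmodule (Fin 3) ℂ d) ⊓
    ⨅ (i : Fin k), ⨅ (ν : Fin 3 → ℕ), ⨅ (_ : ν 0 + ν 1 + ν 2 < m i),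
      LinearMap.ker ((aeval (p i)).toLinearMap ∘ₗ mderiv ν)

/-- The projective dimension `ℓ` of the linear system (`-1` means empty). -/
noncomputable def projDim {k : ℕ} (p : Fin k → Fin 3 → ℂ) (d : ℕ) (m : Fin k → ℕ) : ℤ :=
  (Module.finrank ℂ (linSys p d m) : ℤ) - 1

/-- The virtual dimension `v = d(d+3)/2 - ∑ mᵢ(mᵢ+1)/2`. -/
def virtDim {k : ℕ} (d : ℕ) (m : Fin k → ℕ) : ℤ :=
  ((d : ℤ) * (d + 3)) / 2 - ∑ i : Fin k, ((m i : ℤ) * (m i + 1)) / 2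

/-- The quasi-homogeneous multiplicity vector `(m₀, 6, …, 6)` on `n + 1` points. -/
def qh (n m0 : ℕ) : Fin (n + 1) → ℕ := fun i => if i = 0 then m0 else 6

/-- A property `Q` of configurations of `k` points of `ℙ²` (given by nonzero homogeneous
coordinate vectors) holds for points in general position: there is a nonzero polynomial
in the coordinates such that `Q` holds whenever it does not vanish. -/
def Generically (k : ℕ) (Q : (Fin k → Fin 3 → ℂ) → Prop) : Prop :=
  ∃ P : MvPolynomial (Fin k × Fin 3) ℂ, P ≠ 0 ∧
    ∀ p : Fin k → Fin 3 → ℂ, (∀ i, p i ≠ 0) →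
      eval (fun x => p x.1 x.2) P ≠ 0 → Q p

/-!
A de Jonquières transformation of degree `e + 1`, `z ↦ (c z + d) / (a z + b)` on the lines through
`p₀`, has an `e`-fold base point at `p₀` and `2 e` simple ones, which may be chosen freely: they
impose linear conditions on `(a, b)` and on `(c, d)`. Its determinant `a d - b c` is a constant
times the product `Π` of the `2 e` lines joining `p₀` to the simple base points, and its inverse
is a de Jonquières transformation with the same determinant. Pulling a curve of degree
`d = (2 s + δ + t) e + δ` with multiplicities `d - δ - t` at `p₀` and `s + δ + t` at the simple
base points back along the inverse, one sees that its equation is `Π ^ s * (a z + b) ^ t` times the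
pullback of a form of degree `δ`. So the system has dimension `(δ + 2).choose 2 - 1`, which exceeds
the virtual one by `2 e * s.choose 2 + t.choose 2`: every line that is an `s`-fold fixed component
contributes `s.choose 2`, and so does the `t`-fold curve `a z + b = 0` with `t.choose 2`.
-/

section PointIdeal

variable {σ R S : Type*} [CommRing R] [CommRing S] [Algebra R S]

/-- The ideal of the polynomials vanishing at the affine point `p`. Its power `pointIdeal p ^ m`
consists of the polynomials with multiplicity at least `m` at `p`. -/
noncomputable abbrev pointIdeal (p : σ → R) : Ideal (MvPolynomial σ R) := RingHom.ker (eval p)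

theorem pointIdeal_zero : pointIdeal (0 : σ → R) = idealOfVars σ R := by
  ext F
  rw [← pow_one (idealOfVars σ R), mem_pow_idealOfVars_iff']
  simp [RingHom.mem_ker, eval_zero, constantCoeff_eq, Finsupp.degree_eq_zero_iff]

theorem aeval_mem_pow {q : σ → R} {m : ℕ} {F : MvPolynomial σ R} (hF : F ∈ pointIdeal q ^ m)
    {I : Ideal S} {f : σ → S} (hf : ∀ j, f j - algebraMap R S (q j) ∈ I) :
    aeval f F ∈ I ^ m := by
  suffices h : pointIdeal q ≤ I.comap (aeval f : MvPolynomial σ R →ₐ[R] S) from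
    Ideal.le_comap_pow _ m (Ideal.pow_right_mono h m hF)
  intro G hG
  have hmk (j) : Ideal.Quotient.mkₐ R I (f j) = algebraMap R (S ⧸ I) (q j) :=
    (Ideal.Quotient.mk_eq_mk_iff_sub_mem _ _).2 (hf j)
  rw [Ideal.mem_comap, ← Ideal.Quotient.eq_zero_iff_mem, ← Ideal.Quotient.mkₐ_eq_mk R,
    comp_aeval_apply, funext hmk]
  exact (aeval_algebraMap_apply _ q G).trans
    (by rw [aeval_eq_eval, RingHom.mem_ker.1 hG, map_zero])

theorem aeval_mem_pow_of_isHomogeneous {d : ℕ} {F : MvPolynomial σ R} (hF : F.IsHomogeneous d)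
    {I : Ideal S} {f : σ → S} (hf : ∀ j, f j ∈ I) : aeval f F ∈ I ^ d := by
  refine aeval_mem_pow (q := 0) ?_ (by simpa using hf)
  rw [pointIdeal_zero, mem_pow_idealOfVars_iff]
  exact fun s hs => (hF.degree_eq_sum_deg_support hs).le

theorem aeval_mem_pointIdeal_pow {τ : Type*} {p : τ → R} {m : ℕ} {F : MvPolynomial σ R}
    {f : σ → MvPolynomial τ R} (hF : F ∈ pointIdeal (fun j => eval p (f j)) ^ m) :
    aeval f F ∈ pointIdeal p ^ m :=
  aeval_mem_pow hF fun j => by simp [RingHom.mem_ker, algebraMap_eq]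

theorem isHomogeneous_aeval_mul_left {d : ℕ} {F : MvPolynomial σ R} (hF : F.IsHomogeneous d)
    (c : S) (f : σ → S) : aeval (fun j => c * f j) F = c ^ d * aeval f F := by
  rw [aeval_def, aeval_def, eval₂_eq, eval₂_eq, Finset.mul_sum]
  refine Finset.sum_congr rfl fun s hs => ?_
  simp only [mul_pow, Finset.prod_mul_distrib, Finset.prod_pow_eq_pow_sum,
    ← hF.degree_eq_sum_deg_support hs]
  ring

/-- Substituting `T ↦ c T` in `F (c q + r T)` gives `c ^ d F (q + r T)`, which is divisible by
`T ^ m`; since `c` is not a zero divisor, so is `F (c q + r T)`. -/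
theorem X_pow_dvd_aeval [IsDomain S] {q : σ → R} {m d : ℕ} {F : MvPolynomial σ R}
    (hF : F ∈ pointIdeal q ^ m) (hd : F.IsHomogeneous d) {c : S} (hc : c ≠ 0) (r : σ → S) :
    Polynomial.X ^ m ∣ aeval (fun j => Polynomial.C (c * algebraMap R S (q j)) +
      Polynomial.C (r j) * Polynomial.X) F := by
  set P := aeval (fun j => Polynomial.C (c * algebraMap R S (q j)) +
    Polynomial.C (r j) * Polynomial.X) F with hP
  have hcomp : P.comp (Polynomial.C c * Polynomial.X) = Polynomial.C c ^ d *
      aeval (fun j => algebraMap R (Polynomial S) (q j) + Polynomial.C (r j) * Polynomial.X) F := by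
    rw [← isHomogeneous_aeval_mul_left hd, Polynomial.comp_eq_aeval,
      ← AlgHom.coe_restrictScalars' R, hP, comp_aeval_apply]
    congr 2
    ext1 j
    simp only [map_mul, AlgHom.coe_restrictScalars', map_add, Polynomial.aeval_C,
      Polynomial.algebraMap_eq, Polynomial.aeval_X,
      IsScalarTower.algebraMap_apply R S (Polynomial S)]
    ring
  have hdvd : Polynomial.X ^ m ∣ P.comp (Polynomial.C c * Polynomial.X) := by
    rw [hcomp, ← Ideal.mem_span_singleton, ← Ideal.span_singleton_pow]
    exact Ideal.mul_mem_left _ _ (aeval_mem_pow hF fun j => by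
      simp [Ideal.mem_span_singleton])
  rw [Polynomial.X_pow_dvd_iff] at hdvd ⊢
  intro i hi
  simpa [hc] using hdvd i hi

theorem pow_dvd_aeval [IsDomain S] {q : σ → R} {m d : ℕ} {F : MvPolynomial σ R}
    (hF : F ∈ pointIdeal q ^ m) (hd : F.IsHomogeneous d) {D c : S} (hc : c ≠ 0) {g : σ → S}
    (hg : ∀ j, D ∣ g j - c * algebraMap R S (q j)) : D ^ m ∣ aeval g F := by
  choose r hr using hg
  have h := map_dvd ((Polynomial.aeval D).restrictScalars R) (X_pow_dvd_aeval hF hd hc r)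
  rw [comp_aeval_apply] at h
  convert h using 1
  · simp
  · congr 2
    ext j
    simp only [AlgHom.coe_restrictScalars', map_add, map_mul, Polynomial.aeval_C,
      Algebra.algebraMap_self, RingHom.id_apply, Polynomial.aeval_X]
    linear_combination hr j

end PointIdeal

section LinSys

theorem coeff_pderiv_pow {σ R : Type*} [CommRing R] (i : σ) (n : ℕ) (s : σ →₀ ℕ)
    (F : MvPolynomial σ R) : coeff s (((pderiv i).toLinearMap ^ n) F) =
      coeff (s + Finsupp.single i n) F * ((s i + 1).ascFactorial n : R) := by
  induction n generalizing s with
  | zero => simp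
  | succ n ih =>
    have hfac :
        ((s i + 1 + 1).ascFactorial n * (s i + 1) : R) = (s i + 1).ascFactorial (n + 1) := by
      rw [Nat.ascFactorial_succ, ← Nat.succ_ascFactorial]
      push_cast
      ring
    rw [pow_succ', Module.End.mul_apply, Derivation.coeFn_coe, coeff_pderiv, ih, add_assoc,
      ← Finsupp.single_add, add_comm 1 n, Finsupp.add_apply, Finsupp.single_eq_same, mul_assoc,
      hfac]

theorem eval_zero_mderiv (ν : Fin 3 →₀ ℕ) (F : MvPolynomial (Fin 3) ℂ) :
    eval 0 (mderiv ν F) = coeff ν F * ∏ i, (ν i).factorial := by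
  have hν : ν = 0 + Finsupp.single 0 (ν 0) + Finsupp.single 1 (ν 1) + Finsupp.single 2 (ν 2) := by
    ext i
    fin_cases i <;> simp
  rw [eval_zero, constantCoeff_eq, mderiv, LinearMap.comp_apply, LinearMap.comp_apply,
    coeff_pderiv_pow, coeff_pderiv_pow, coeff_pderiv_pow, ← hν]
  simp only [zero_add, Finsupp.add_apply, Finsupp.single_eq_of_ne, ne_eq, Fin.reduceEq,
    not_false_eq_true, add_zero, Finsupp.zero_apply, Nat.one_ascFactorial, Fin.prod_univ_three,
    Nat.cast_mul]
  ring

theorem mem_pointIdeal_zero_pow_iff {m : ℕ} {F : MvPolynomial (Fin 3) ℂ} :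
    F ∈ pointIdeal 0 ^ m ↔ ∀ ν : Fin 3 → ℕ, ν 0 + ν 1 + ν 2 < m → eval 0 (mderiv ν F) = 0 := by
  rw [pointIdeal_zero, mem_pow_idealOfVars_iff']
  refine Finsupp.equivFunOnFinite.forall_congr fun {ν} => ?_
  have hfac : ((∏ i, (ν i).factorial : ℕ) : ℂ) ≠ 0 :=
    Nat.cast_ne_zero.2 (Finset.prod_ne_zero_iff.2 fun i _ => (ν i).factorial_ne_zero)
  rw [show Finsupp.equivFunOnFinite ν = ⇑ν from rfl, eval_zero_mderiv, mul_eq_zero_iff_right hfac,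
    Finsupp.degree_eq_sum, Fin.sum_univ_three]

/-- The substitution of `x + p` for `x`, which moves the multiplicity at `p` to the origin. -/
noncomputable def translation {σ R : Type*} [CommRing R] (p : σ → R) :
    MvPolynomial σ R →ₐ[R] MvPolynomial σ R :=
  aeval fun j => X j + C (p j)

theorem translation_neg_translation {σ R : Type*} [CommRing R] (p : σ → R) (F : MvPolynomial σ R) :
    translation (-p) (translation p F) = F := by
  rw [translation, translation, comp_aeval_apply]
  simp

theorem eval_translation {σ R : Type*} [CommRing R] (p q : σ → R) (F : MvPolynomial σ R) :
    eval q (translation p F) = eval (q + p) F := by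
  rw [translation, ← aeval_eq_eval, ← AlgHom.coe_restrictScalars' R, comp_aeval_apply]
  simp [aeval_eq_eval, Pi.add_def]

theorem translation_mem_pointIdeal_pow_iff {σ R : Type*} [CommRing R] {p : σ → R} {m : ℕ}
    {F : MvPolynomial σ R} : translation p F ∈ pointIdeal 0 ^ m ↔ F ∈ pointIdeal p ^ m := by
  refine ⟨fun h => ?_, fun h => aeval_mem_pointIdeal_pow (by simpa using h)⟩
  have hF : translation (-p) (translation p F) ∈ pointIdeal p ^ m :=
    aeval_mem_pointIdeal_pow (by simpa [Pi.zero_def] using h)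
  rwa [translation_neg_translation] at hF

theorem pderiv_translation {σ R : Type*} [CommRing R] (p : σ → R) (i : σ) (F : MvPolynomial σ R) :
    pderiv i (translation p F) = translation p (pderiv i F) := by
  classical
  induction F using MvPolynomial.induction_on with
  | C a => simp [translation]
  | add F G hF hG => simp [hF, hG]
  | mul_X F j hF =>
    have hX : pderiv i (translation p (X j)) = translation p (pderiv i (X j)) := by
      rcases eq_or_ne j i with rfl | hji
      · simp [translation]
      · simp [translation, pderiv_X_of_ne hji]
    simp [hF, hX, Derivation.leibniz]

theorem mderiv_translation (p : Fin 3 → ℂ) (ν : Fin 3 → ℕ) (F : MvPolynomial (Fin 3) ℂ) :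
    mderiv ν (translation p F) = translation p (mderiv ν F) := by
  have h (i : Fin 3) (n : ℕ) (F) : ((pderiv i).toLinearMap ^ n) (translation p F) =
      translation p (((pderiv i).toLinearMap ^ n) F) := by
    simp only [Module.End.pow_apply]
    exact (Function.Semiconj.iterate_right (pderiv_translation p i · |>.symm) n F).symm
  simp only [mderiv, LinearMap.comp_apply, h]

theorem mem_linSys {k : ℕ} {p : Fin k → Fin 3 → ℂ} {d : ℕ} {m : Fin k → ℕ}
    {F : MvPolynomial (Fin 3) ℂ} :
    F ∈ linSys p d m ↔ F.IsHomogeneous d ∧ ∀ i, F ∈ pointIdeal (p i) ^ m i := by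
  simp only [← translation_mem_pointIdeal_pow_iff (F := F), mem_pointIdeal_zero_pow_iff,
    mderiv_translation, eval_translation, zero_add]
  simp only [linSys, Submodule.mem_inf, mem_homogeneousSubmodule, Submodule.mem_iInf]
  rfl

end LinSys

section LinearChange

theorem finrank_eq_of_map_eq {K M N : Type*} [DivisionRing K] [AddCommGroup M] [AddCommGroup N]
    [Module K M] [Module K N] {f : M →ₗ[K] N} {U : Submodule K M} {V : Submodule K N}
    (hUV : U.map f = V) (hf : ∀ x ∈ U, f x = 0 → x = 0) :
    Module.finrank K V = Module.finrank K U := by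
  rw [← hUV, ← LinearMap.range_domRestrict]
  exact LinearMap.finrank_range_of_inj
    ((injective_iff_map_eq_zero _).2 fun x hx => Subtype.ext (hf x x.2 hx))

theorem aeval_toMvPolynomial_mem_linSys (A : Matrix (Fin 3) (Fin 3) ℂ) {k d : ℕ}
    {p : Fin k → Fin 3 → ℂ} {m : Fin k → ℕ} {F : MvPolynomial (Fin 3) ℂ}
    (hF : F ∈ linSys (fun i => A.mulVec (p i)) d m) :
    aeval A.toMvPolynomial F ∈ linSys p d m := by
  rw [mem_linSys] at hF ⊢
  refine ⟨by simpa using hF.1.aeval _ A.toMvPolynomial_isHomogeneous, fun i => ?_⟩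
  refine aeval_mem_pointIdeal_pow ?_
  simpa only [Matrix.toMvPolynomial_eval_eq_apply] using hF.2 i

theorem aeval_toMvPolynomial_aeval_toMvPolynomial {A B : Matrix (Fin 3) (Fin 3) ℂ}
    (h : B * A = 1) (F : MvPolynomial (Fin 3) ℂ) :
    aeval A.toMvPolynomial (aeval B.toMvPolynomial F) = F := by
  have hX (i : Fin 3) : aeval A.toMvPolynomial (B.toMvPolynomial i) = X i := by
    rw [aeval_eq_bind₁, ← Matrix.toMvPolynomial_mul, h, Matrix.toMvPolynomial_one]
  rw [comp_aeval_apply, funext hX, aeval_X_left, AlgHom.id_apply]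

theorem finrank_linSys_mulVec {A : Matrix (Fin 3) (Fin 3) ℂ} (hA : A.det ≠ 0) {k : ℕ}
    (p : Fin k → Fin 3 → ℂ) (d : ℕ) (m : Fin k → ℕ) :
    Module.finrank ℂ (linSys (fun i => A.mulVec (p i)) d m) = Module.finrank ℂ (linSys p d m) := by
  have hAinv := A.mul_nonsing_inv hA.isUnit
  have hinvA := A.nonsing_inv_mul hA.isUnit
  refine (finrank_eq_of_map_eq (f := (aeval A.toMvPolynomial).toLinearMap) ?_ ?_).symm
  · refine le_antisymm (Submodule.map_le_iff_le_comap.2 fun F hF =>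
      aeval_toMvPolynomial_mem_linSys A hF) fun F hF => ?_
    refine ⟨aeval A⁻¹.toMvPolynomial F, aeval_toMvPolynomial_mem_linSys _ ?_,
      aeval_toMvPolynomial_aeval_toMvPolynomial hinvA F⟩
    simpa only [Matrix.mulVec_mulVec, hinvA, Matrix.one_mulVec] using hF
  · intro F _ hF
    rw [← aeval_toMvPolynomial_aeval_toMvPolynomial hAinv F]
    exact (congrArg _ hF).trans (map_zero _)

end LinearChange

section Homogeneous

theorem exists_isHomogeneous_eq_mul {σ R : Type*} [CommRing R] {m n : ℕ} {F f : MvPolynomial σ R}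
    (hF : F.IsHomogeneous (m + n)) (hf : f.IsHomogeneous m) (h : f ∣ F) :
    ∃ G : MvPolynomial σ R, G.IsHomogeneous n ∧ F = f * G := by
  obtain ⟨G, rfl⟩ := h
  refine ⟨homogeneousComponent n G, homogeneousComponent_isHomogeneous n G, ?_⟩
  let := gradedAlgebra (σ := σ) (R := R)
  have hcomp := DirectSum.coe_decompose_mul_add_of_left_mem (homogeneousSubmodule σ R) (j := n)
    (b := G) ((mem_homogeneousSubmodule m f).2 hf)
  rw [DirectSum.decompose_of_mem_same _ ((mem_homogeneousSubmodule _ _).2 hF)] at hcomp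
  rw [hcomp]
  congr 1
  exact decomposition.decompose'_apply G n

theorem finrank_homogeneousSubmodule (σ R : Type*) [Fintype σ] [CommRing R] [Nontrivial R] (n : ℕ) :
    Module.finrank R (homogeneousSubmodule σ R n) = (Fintype.card σ + n - 1).choose n := by
  classical
  have hset : {s : σ →₀ ℕ | s.degree = n} = ↑(Finset.univ.finsuppAntidiag n : Finset (σ →₀ ℕ)) := by
    ext s
    simp [Finset.mem_finsuppAntidiag, Finsupp.degree_eq_sum]
  rw [homogeneousSubmodule_eq_finsupp_supported, hset,
    (AddMonoidAlgebra.supportedEquivFinsupp _).finrank_eq, Module.finrank_finsupp_self,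
    ← Finset.card_univ (α := σ), ← Finset.card_finsuppAntidiag_nat_eq_choose]
  exact Fintype.card_coe _

theorem finrank_homogeneousSubmodule_fin_three (R : Type*) [CommRing R] [Nontrivial R] (n : ℕ) :
    Module.finrank R (homogeneousSubmodule (Fin 3) R n) = (n + 2).choose 2 := by
  rw [finrank_homogeneousSubmodule, Fintype.card_fin, show 3 + n - 1 = n + 2 by lia,
    Nat.choose_symm_add]

end Homogeneous

section Ternary

variable {R S : Type*} [CommRing R] [CommRing S] [Algebra R S]

/-- A polynomial in two variables viewed as a polynomial in three. For a form of degree `n` in two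
variables it is the equation of a cone: a union of `n` lines through `(0 : 0 : 1)`. -/
noncomputable def ternary : MvPolynomial (Fin 2) R →ₐ[R] MvPolynomial (Fin 3) R :=
  aeval fun j => X j.castSucc

theorem isHomogeneous_ternary {q : MvPolynomial (Fin 2) R} {n : ℕ} (hq : q.IsHomogeneous n) :
    (ternary q).IsHomogeneous n := by
  simpa [ternary] using hq.aeval _ fun j : Fin 2 => isHomogeneous_X R j.castSucc

theorem aeval_ternary (g : Fin 3 → S) (q : MvPolynomial (Fin 2) R) :
    aeval g (ternary q) = aeval (fun j : Fin 2 => g j.castSucc) q := by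
  rw [ternary, comp_aeval_apply]
  simp only [aeval_X]

theorem eval_ternary (x : Fin 3 → R) (q : MvPolynomial (Fin 2) R) :
    eval x (ternary q) = eval (fun j : Fin 2 => x j.castSucc) q := by
  simpa only [aeval_eq_eval] using aeval_ternary x q

theorem aeval_X_ternary (z : MvPolynomial (Fin 3) R) (q : MvPolynomial (Fin 2) R) :
    aeval ![X 0, X 1, z] (ternary q) = ternary q := by
  rw [aeval_ternary, ternary]
  congr 2
  ext1 j
  fin_cases j <;> rfl

theorem aeval_mul_X_ternary {q : MvPolynomial (Fin 2) R} {n : ℕ} (hq : q.IsHomogeneous n)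
    (c z : MvPolynomial (Fin 3) R) :
    aeval ![c * X 0, c * X 1, z] (ternary q) = c ^ n * ternary q := by
  rw [aeval_ternary, ternary, ← isHomogeneous_aeval_mul_left hq]
  congr 2
  ext1 j
  fin_cases j <;> rfl

theorem ternary_mem_pointIdeal_pow {q : MvPolynomial (Fin 2) R} {n : ℕ} (hq : q.IsHomogeneous n)
    {p : Fin 3 → R} (h0 : p 0 = 0) (h1 : p 1 = 0) : ternary q ∈ pointIdeal p ^ n := by
  refine aeval_mem_pow_of_isHomogeneous hq fun j => ?_
  rw [RingHom.mem_ker, eval_X]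
  fin_cases j
  exacts [h0, h1]

theorem ternary_dvd_mul_X_add {f p q : MvPolynomial (Fin 2) R}
    (h : ternary f ∣ ternary p * X 2 + ternary q) :
    ternary f ∣ ternary p ∧ ternary f ∣ ternary q := by
  have h0 := map_dvd (aeval ![(X 0 : MvPolynomial (Fin 3) R), X 1, 0]) h
  have h1 := map_dvd (aeval ![(X 0 : MvPolynomial (Fin 3) R), X 1, 1]) h
  simp only [map_add, map_mul, aeval_X_ternary, aeval_X, Matrix.cons_val, mul_zero, mul_one,
    zero_add] at h0 h1
  exact ⟨(dvd_add_left h0).1 h1, h0⟩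

theorem ternary_eq_zero_of_mul_X_add_eq_zero {p q : MvPolynomial (Fin 2) R}
    (h : ternary p * X 2 + ternary q = 0) : ternary p = 0 ∧ ternary q = 0 := by
  simpa only [map_zero, zero_dvd_iff] using ternary_dvd_mul_X_add (f := 0) (by rw [h]; simp)

end Ternary

section Fibre

variable {K : Type*} [Field K]

/-- The equation of the line through `(0 : 0 : 1)` and `q`. -/
noncomputable def fibre (q : Fin 3 → K) : MvPolynomial (Fin 3) K :=
  ternary (C (q 1) * X 0 - C (q 0) * X 1)

theorem fibre_eq (q : Fin 3 → K) : fibre q = C (q 1) * X 0 - C (q 0) * X 1 := by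
  simp [fibre, ternary, algebraMap_eq]

theorem isHomogeneous_fibre (q : Fin 3 → K) : (fibre q).IsHomogeneous 1 := by
  rw [fibre_eq]
  exact ((isHomogeneous_X K 0).C_mul _).sub ((isHomogeneous_X K 1).C_mul _)

theorem eval_fibre (p q : Fin 3 → K) : eval p (fibre q) = q 1 * p 0 - q 0 * p 1 := by
  simp [fibre_eq]

variable {q : Fin 3 → K}

theorem irreducible_fibre (hq : q 1 ≠ 0) : Irreducible (fibre q) := by
  have hcoeff : coeff (Finsupp.single 0 1) (fibre q) = q 1 := by
    simp [fibre_eq, coeff_X, coeff_C_mul, Finsupp.single_left_inj]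
  have hne : fibre q ≠ 0 := fun h => hq (by simpa [h] using hcoeff.symm)
  refine irreducible_of_totalDegree_eq_one ((isHomogeneous_fibre q).totalDegree hne) fun x hx => ?_
  exact isUnit_of_dvd_unit (hcoeff ▸ hx (Finsupp.single 0 1)) hq.isUnit

theorem isRelPrime_fibre_fibre {q' : Fin 3 → K} (hq : q 1 ≠ 0)
    (h : q 0 * q' 1 - q' 0 * q 1 ≠ 0) : IsRelPrime (fibre q) (fibre q') := by
  refine (irreducible_fibre hq).isRelPrime_iff_not_dvd.2 fun hdvd => h ?_
  have heval := map_dvd (eval q) hdvd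
  rw [eval_fibre, eval_fibre, mul_comm, sub_self, zero_dvd_iff] at heval
  linear_combination heval

theorem fibre_dvd_aeval (hq : q 1 ≠ 0) {F : MvPolynomial (Fin 3) K} {d : ℕ}
    (hF : F.IsHomogeneous d) (h : eval q F = 0) :
    fibre q ∣ aeval ![X 0, X 1, C (q 2 / q 1) * X 1] F := by
  rw [← pow_one (fibre q)]
  refine pow_dvd_aeval (q := q) (c := C (q 1)⁻¹ * X 1) (by simpa [RingHom.mem_ker]) hF
    (by simp [hq]) fun j => ?_
  have hC : C (q 1)⁻¹ * C (q 1) = (1 : MvPolynomial (Fin 3) K) := by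
    rw [← C_mul, inv_mul_cancel₀ hq, C_1]
  rw [algebraMap_eq]
  fin_cases j
  · refine ⟨C (q 1)⁻¹, ?_⟩
    simp only [Fin.zero_eta, Matrix.cons_val, fibre_eq]
    linear_combination -X 0 * hC
  · refine ⟨0, ?_⟩
    simp only [Fin.mk_one, Matrix.cons_val]
    linear_combination -X 1 * hC
  · refine ⟨0, ?_⟩
    simp only [Fin.reduceFinMk, Matrix.cons_val, div_eq_mul_inv, C_mul]
    ring

theorem fibre_dvd_ternary (hq : q 1 ≠ 0) {f : MvPolynomial (Fin 2) K} {d : ℕ}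
    (hf : f.IsHomogeneous d) (h : eval q (ternary f) = 0) : fibre q ∣ ternary f := by
  simpa only [aeval_X_ternary] using fibre_dvd_aeval hq (isHomogeneous_ternary hf) h

end Fibre

/-- A de Jonquières transformation `z ↦ (c z + d) / (a z + b)` of degree `k + 2`, preserving the
pencil of lines through `(0 : 0 : 1)`; here `z` is the third coordinate and the coefficients are
forms in the first two. -/
structure DeJonquieres (R : Type*) [CommRing R] (k : ℕ) where
  a : MvPolynomial (Fin 2) R
  b : MvPolynomial (Fin 2) R
  c : MvPolynomial (Fin 2) R
  d : MvPolynomial (Fin 2) R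
  isHomogeneous_a : a.IsHomogeneous k
  isHomogeneous_b : b.IsHomogeneous (k + 1)
  isHomogeneous_c : c.IsHomogeneous (k + 1)
  isHomogeneous_d : d.IsHomogeneous (k + 2)

namespace DeJonquieres

section CommRing

variable {R : Type*} [CommRing R] {k : ℕ} (T : DeJonquieres R k)

/-- The denominator of `z ↦ (c z + d) / (a z + b)`. -/
noncomputable def den : MvPolynomial (Fin 3) R := ternary T.a * X 2 + ternary T.b

/-- The numerator of `z ↦ (c z + d) / (a z + b)`. -/
noncomputable def num : MvPolynomial (Fin 3) R := ternary T.c * X 2 + ternary T.d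

/-- The determinant of `z ↦ (c z + d) / (a z + b)`, up to sign. -/
noncomputable def det : MvPolynomial (Fin 3) R := ternary (T.a * T.d - T.b * T.c)

/-- The homogeneous coordinates of the image of the point `(X 0 : X 1 : X 2)`. -/
noncomputable def coord : Fin 3 → MvPolynomial (Fin 3) R := ![T.den * X 0, T.den * X 1, T.num]

theorem coord_zero : T.coord 0 = T.den * X 0 := rfl

theorem coord_one : T.coord 1 = T.den * X 1 := rfl

theorem coord_two : T.coord 2 = T.num := rfl

/-- The inverse transformation `z ↦ (b z - d) / (-a z + c)`, with the signs of numerator and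
denominator changed. -/
noncomputable def symm : DeJonquieres R k where
  a := T.a
  b := -T.c
  c := -T.b
  d := T.d
  isHomogeneous_a := T.isHomogeneous_a
  isHomogeneous_b := T.isHomogeneous_c.neg
  isHomogeneous_c := T.isHomogeneous_b.neg
  isHomogeneous_d := T.isHomogeneous_d

theorem symm_symm : T.symm.symm = T := by
  simp [symm]

theorem det_symm : T.symm.det = T.det := by
  simp only [det, symm]
  ring_nf

theorem det_eq : T.det = ternary T.a * T.num - ternary T.c * T.den := by
  simp only [det, num, den, map_sub, map_mul]
  ring

theorem isHomogeneous_den : T.den.IsHomogeneous (k + 1) :=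
  ((isHomogeneous_ternary T.isHomogeneous_a).mul (isHomogeneous_X R 2)).add
    (isHomogeneous_ternary T.isHomogeneous_b)

theorem isHomogeneous_num : T.num.IsHomogeneous (k + 2) :=
  ((isHomogeneous_ternary T.isHomogeneous_c).mul (isHomogeneous_X R 2)).add
    (isHomogeneous_ternary T.isHomogeneous_d)

theorem isHomogeneous_mul_sub_mul : (T.a * T.d - T.b * T.c).IsHomogeneous (2 * (k + 1)) := by
  convert (T.isHomogeneous_a.mul T.isHomogeneous_d).sub
    (by convert T.isHomogeneous_b.mul T.isHomogeneous_c using 1; ring) using 1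
  ring

theorem isHomogeneous_det : T.det.IsHomogeneous (2 * (k + 1)) :=
  isHomogeneous_ternary T.isHomogeneous_mul_sub_mul

theorem isHomogeneous_coord (j : Fin 3) : (T.coord j).IsHomogeneous (k + 2) := by
  fin_cases j
  exacts [T.isHomogeneous_den.mul (isHomogeneous_X R 0),
    T.isHomogeneous_den.mul (isHomogeneous_X R 1), T.isHomogeneous_num]

theorem aeval_coord_ternary {q : MvPolynomial (Fin 2) R} {n : ℕ} (hq : q.IsHomogeneous n) :
    aeval T.coord (ternary q) = T.den ^ n * ternary q :=
  aeval_mul_X_ternary hq _ _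

theorem aeval_coord_det : aeval T.coord T.det = T.den ^ (2 * (k + 1)) * T.det :=
  T.aeval_coord_ternary T.isHomogeneous_mul_sub_mul

theorem aeval_coord_den_symm : aeval T.coord T.symm.den = T.den ^ k * T.det := by
  simp only [den, symm, map_add, map_neg, map_mul, aeval_X,
    T.aeval_coord_ternary T.isHomogeneous_a, T.aeval_coord_ternary T.isHomogeneous_c]
  rw [det_eq, coord_two, den]
  ring

theorem aeval_coord_num_symm : aeval T.coord T.symm.num = T.den ^ (k + 1) * T.det * X 2 := by
  simp only [num, symm, map_add, map_neg, map_mul, aeval_X,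
    T.aeval_coord_ternary T.isHomogeneous_b, T.aeval_coord_ternary T.isHomogeneous_d]
  rw [det, coord_two, num, den, map_sub, map_mul, map_mul]
  ring

theorem aeval_coord_coord_symm (j : Fin 3) :
    aeval T.coord (T.symm.coord j) = T.den ^ (k + 1) * T.det * X j := by
  fin_cases j
  · rw [Fin.zero_eta, coord_zero, map_mul, aeval_coord_den_symm, aeval_X, coord_zero]
    ring
  · rw [Fin.mk_one, coord_one, map_mul, aeval_coord_den_symm, aeval_X, coord_one]
    ring
  · exact T.aeval_coord_num_symm

theorem aeval_coord_aeval_coord_symm {D : ℕ} {F : MvPolynomial (Fin 3) R}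
    (hF : F.IsHomogeneous D) :
    aeval T.coord (aeval T.symm.coord F) = (T.den ^ (k + 1) * T.det) ^ D * F := by
  rw [comp_aeval_apply, funext T.aeval_coord_coord_symm, isHomogeneous_aeval_mul_left hF,
    aeval_X_left, AlgHom.id_apply]

variable {T} in
theorem den_ne_zero (h : T.det ≠ 0) : T.den ≠ 0 := by
  intro hden
  obtain ⟨ha, hb⟩ := ternary_eq_zero_of_mul_X_add_eq_zero hden
  exact h (by rw [det, map_sub, map_mul, map_mul, ha, hb, zero_mul, zero_mul, sub_zero])

variable {T} in
theorem num_ne_zero (h : T.det ≠ 0) : T.num ≠ 0 := by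
  intro hnum
  obtain ⟨hc, hd⟩ := ternary_eq_zero_of_mul_X_add_eq_zero hnum
  exact h (by rw [det, map_sub, map_mul, map_mul, hc, hd, mul_zero, mul_zero, sub_zero])

/-- Pullback of forms along the transformation, with factors `det ^ s * den ^ t` added. -/
noncomputable def lift (s t : ℕ) : MvPolynomial (Fin 3) R →ₗ[R] MvPolynomial (Fin 3) R :=
  LinearMap.mulLeft R (T.det ^ s * T.den ^ t) ∘ₗ (aeval T.coord).toLinearMap

theorem lift_apply (s t : ℕ) (G : MvPolynomial (Fin 3) R) :
    T.lift s t G = T.det ^ s * T.den ^ t * aeval T.coord G := rfl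

variable {T} {δ s t : ℕ} {F G : MvPolynomial (Fin 3) R} {p : Fin 3 → R}

theorem isHomogeneous_lift (hG : G.IsHomogeneous δ) :
    (T.lift s t G).IsHomogeneous ((2 * s + δ + t) * (k + 1) + δ) := by
  rw [lift_apply]
  convert ((T.isHomogeneous_det.pow s).mul (T.isHomogeneous_den.pow t)).mul
    (hG.aeval T.coord T.isHomogeneous_coord) using 1
  ring

theorem lift_mem_pointIdeal_pow (hden : eval p T.den = 0) (hnum : eval p T.num = 0)
    (hG : G.IsHomogeneous δ) : T.lift s t G ∈ pointIdeal p ^ (s + δ + t) := by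
  have hden' : T.den ∈ pointIdeal p := hden
  have hnum' : T.num ∈ pointIdeal p := hnum
  have hdet : T.det ∈ pointIdeal p := by
    rw [det_eq]
    exact sub_mem (Ideal.mul_mem_left _ _ hnum') (Ideal.mul_mem_left _ _ hden')
  have hcoord (j) : T.coord j ∈ pointIdeal p := by
    fin_cases j
    exacts [Ideal.mul_mem_right _ _ hden', Ideal.mul_mem_right _ _ hden', hnum']
  rw [lift_apply, add_right_comm, pow_add, pow_add]
  exact Ideal.mul_mem_mul (Ideal.mul_mem_mul (Ideal.pow_mem_pow hdet s) (Ideal.pow_mem_pow hden' t))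
    (aeval_mem_pow_of_isHomogeneous hG hcoord)

theorem den_mem_pointIdeal_pow (h0 : p 0 = 0) (h1 : p 1 = 0) : T.den ∈ pointIdeal p ^ k :=
  add_mem (Ideal.mul_mem_right _ _ (ternary_mem_pointIdeal_pow T.isHomogeneous_a h0 h1))
    (Ideal.pow_le_pow_right k.le_succ (ternary_mem_pointIdeal_pow T.isHomogeneous_b h0 h1))

theorem num_mem_pointIdeal_pow (h0 : p 0 = 0) (h1 : p 1 = 0) : T.num ∈ pointIdeal p ^ (k + 1) :=
  add_mem (Ideal.mul_mem_right _ _ (ternary_mem_pointIdeal_pow T.isHomogeneous_c h0 h1))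
    (Ideal.pow_le_pow_right (k + 1).le_succ (ternary_mem_pointIdeal_pow T.isHomogeneous_d h0 h1))

theorem coord_mem_pointIdeal_pow (h0 : p 0 = 0) (h1 : p 1 = 0) (j : Fin 3) :
    T.coord j ∈ pointIdeal p ^ (k + 1) := by
  have hX {i : Fin 3} (hi : p i = 0) : (X i : MvPolynomial (Fin 3) R) ∈ pointIdeal p := by
    simpa [RingHom.mem_ker]
  fin_cases j
  exacts [Ideal.mul_mem_mul (den_mem_pointIdeal_pow h0 h1) (hX h0),
    Ideal.mul_mem_mul (den_mem_pointIdeal_pow h0 h1) (hX h1), num_mem_pointIdeal_pow h0 h1]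

theorem lift_mem_pointIdeal_pow_of_eq_zero (h0 : p 0 = 0) (h1 : p 1 = 0)
    (hG : G.IsHomogeneous δ) :
    T.lift s t G ∈ pointIdeal p ^ ((2 * s + δ) * (k + 1) + t * k) := by
  have hdet : T.det ∈ pointIdeal p ^ (2 * (k + 1)) :=
    ternary_mem_pointIdeal_pow T.isHomogeneous_mul_sub_mul h0 h1
  have hG' := aeval_mem_pow_of_isHomogeneous hG (T.coord_mem_pointIdeal_pow h0 h1)
  have h := Ideal.mul_mem_mul (Ideal.mul_mem_mul (Ideal.pow_mem_pow hdet s)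
    (Ideal.pow_mem_pow (T.den_mem_pointIdeal_pow h0 h1) t)) hG'
  rw [← lift_apply, ← pow_mul, ← pow_mul, ← pow_mul, ← pow_add, ← pow_add] at h
  convert h using 2
  ring

variable [IsDomain R]

theorem eq_zero_of_lift_eq_zero (h : T.det ≠ 0) (hG : G.IsHomogeneous δ) (h0 : T.lift s t G = 0) :
    G = 0 := by
  rw [lift_apply] at h0
  have hcoord : aeval T.coord G = 0 := (mul_eq_zero.1 h0).resolve_left
    (mul_ne_zero (pow_ne_zero _ h) (pow_ne_zero _ (den_ne_zero h)))
  have hinv := T.symm.aeval_coord_aeval_coord_symm hG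
  rw [symm_symm, hcoord, map_zero] at hinv
  have h' : T.symm.det ≠ 0 := T.det_symm.symm ▸ h
  exact (mul_eq_zero.1 hinv.symm).resolve_left
    (pow_ne_zero _ (mul_ne_zero (pow_ne_zero _ (den_ne_zero h')) h'))

theorem eq_lift_of_aeval_coord_symm_eq (h : T.det ≠ 0)
    (hF : F.IsHomogeneous ((2 * s + δ + t) * (k + 1) + δ))
    (hFG : aeval T.symm.coord F =
      T.symm.den ^ ((2 * s + δ) * (k + 1) + t * k) * T.det ^ (s + δ + t) * G) :
    F = T.lift s t G := by
  have hcomp := T.aeval_coord_aeval_coord_symm hF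
  simp only [hFG, map_mul, map_pow, aeval_coord_den_symm, aeval_coord_det] at hcomp
  have hne : (T.den ^ (k + 1) * T.det) ^ ((2 * s + δ + t) * (k + 1) + δ) ≠ 0 :=
    pow_ne_zero _ (mul_ne_zero (pow_ne_zero _ (den_ne_zero h)) h)
  refine mul_left_cancel₀ hne (hcomp.symm.trans ?_)
  rw [lift_apply]
  ring

end CommRing

section Field

variable {K : Type*} [Field K] {k : ℕ} {T : DeJonquieres K k} {q : Fin (2 * (k + 1)) → Fin 3 → K}

/-- The points `q i`, which lie on distinct lines through `(0 : 0 : 1)`, are base points of `T`.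
The condition `q i 1 ≠ 0` is a normalization. -/
structure IsBasedAt (T : DeJonquieres K k) (q : Fin (2 * (k + 1)) → Fin 3 → K) : Prop where
  det_ne_zero : T.det ≠ 0
  eval_den (i) : eval (q i) T.den = 0
  eval_num (i) : eval (q i) T.num = 0
  ne_zero (i) : q i 1 ≠ 0
  pairwise_fibre : Pairwise fun i j => q i 0 * q j 1 - q j 0 * q i 1 ≠ 0

namespace IsBasedAt

theorem pairwise_isRelPrime_fibre (h : T.IsBasedAt q) :
    Pairwise (Function.onFun IsRelPrime fun i => fibre (q i)) :=
  fun i _ hij => isRelPrime_fibre_fibre (h.ne_zero i) (h.pairwise_fibre hij)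

theorem associated_prod_fibre_det (h : T.IsBasedAt q) :
    Associated (∏ i, fibre (q i)) T.det := by
  have hdvd : ∏ i, fibre (q i) ∣ T.det := by
    refine Fintype.prod_dvd_of_isRelPrime h.pairwise_isRelPrime_fibre fun i => ?_
    refine fibre_dvd_ternary (h.ne_zero i) T.isHomogeneous_mul_sub_mul ?_
    rw [← det, det_eq, map_sub, map_mul, map_mul, h.eval_den, h.eval_num, mul_zero, mul_zero,
      sub_zero]
  have hprod : (∏ i, fibre (q i)).IsHomogeneous (2 * (k + 1)) := by
    simpa using IsHomogeneous.prod Finset.univ (fun i => fibre (q i)) (fun _ => 1)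
      fun i _ => isHomogeneous_fibre (q i)
  obtain ⟨G, hG, hdet⟩ := exists_isHomogeneous_eq_mul (n := 0) T.isHomogeneous_det hprod hdvd
  rw [← totalDegree_zero_iff_isHomogeneous, totalDegree_eq_zero_iff_eq_C] at hG
  have hG0 : G ≠ 0 := right_ne_zero_of_mul (hdet ▸ h.det_ne_zero)
  rw [hdet]
  refine associated_mul_unit_right _ _ ?_
  rw [hG] at hG0 ⊢
  exact (isUnit_iff_ne_zero.2 fun h0 => hG0 (by rw [h0, C_0])).map C

theorem squarefree_det (h : T.IsBasedAt q) : Squarefree T.det :=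
  h.associated_prod_fibre_det.squarefree_iff.1 <| Finset.squarefree_prod_of_pairwise_isCoprime
    (h.pairwise_isRelPrime_fibre.set_pairwise _) fun i _ =>
      (irreducible_fibre (h.ne_zero i)).squarefree

theorem isRelPrime_fibre_den_symm (h : T.IsBasedAt q) (i : Fin (2 * (k + 1))) :
    IsRelPrime (fibre (q i)) T.symm.den := by
  refine (irreducible_fibre (h.ne_zero i)).isRelPrime_iff_not_dvd.2 fun hdvd => ?_
  obtain ⟨ha, hc⟩ : fibre (q i) ∣ ternary T.a ∧ fibre (q i) ∣ ternary T.c := by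
    have h := ternary_dvd_mul_X_add hdvd
    rwa [symm, map_neg, dvd_neg] at h
  have heval {f : MvPolynomial (Fin 2) K} (hf : fibre (q i) ∣ ternary f) :
      eval (q i) (ternary f) = 0 := by
    have := map_dvd (eval (q i)) hf
    rwa [eval_fibre, mul_comm, sub_self, zero_dvd_iff] at this
  have hb : fibre (q i) ∣ ternary T.b := by
    refine fibre_dvd_ternary (h.ne_zero i) T.isHomogeneous_b ?_
    have hden := h.eval_den i
    rwa [den, map_add, map_mul, heval ha, zero_mul, zero_add] at hden
  have hd : fibre (q i) ∣ ternary T.d := by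
    refine fibre_dvd_ternary (h.ne_zero i) T.isHomogeneous_d ?_
    have hnum := h.eval_num i
    rwa [num, map_add, map_mul, heval hc, zero_mul, zero_add] at hnum
  refine (irreducible_fibre (h.ne_zero i)).not_isUnit (h.squarefree_det _ ?_)
  rw [det, map_sub, map_mul, map_mul]
  exact dvd_sub (mul_dvd_mul ha hd) (mul_dvd_mul hb hc)

theorem fibre_dvd_coord_symm_sub (h : T.IsBasedAt q) (i : Fin (2 * (k + 1))) (j : Fin 3) :
    fibre (q i) ∣ T.symm.coord j - C (q i 1)⁻¹ * X 1 * T.symm.den * C (q i j) := by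
  have hC : C (q i 1)⁻¹ * C (q i 1) = (1 : MvPolynomial (Fin 3) K) := by
    rw [← C_mul, inv_mul_cancel₀ (h.ne_zero i), C_1]
  fin_cases j
  · refine ⟨C (q i 1)⁻¹ * T.symm.den, ?_⟩
    rw [Fin.zero_eta, coord_zero, fibre_eq]
    linear_combination -(T.symm.den * X 0) * hC
  · refine ⟨0, ?_⟩
    rw [Fin.mk_one, coord_one]
    linear_combination -(T.symm.den * X 1) * hC
  · have hden := fibre_dvd_aeval (h.ne_zero i) T.isHomogeneous_den (h.eval_den i)
    have hnum := fibre_dvd_aeval (h.ne_zero i) T.isHomogeneous_num (h.eval_num i)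
    simp only [den, num, map_add, map_mul, aeval_X_ternary, aeval_X, Matrix.cons_val] at hden hnum
    convert dvd_sub hnum (hden.mul_left (X 2)) using 1
    simp only [Fin.reduceFinMk, coord_two, num, den, symm, map_neg, div_eq_mul_inv, C_mul]
    ring

variable {m D : ℕ} {F : MvPolynomial (Fin 3) K}

theorem fibre_pow_dvd_aeval_coord_symm (h : T.IsBasedAt q) (hF : F.IsHomogeneous D)
    {i : Fin (2 * (k + 1))} (hFi : F ∈ pointIdeal (q i) ^ m) :
    fibre (q i) ^ m ∣ aeval T.symm.coord F := by
  refine pow_dvd_aeval hFi hF ?_ (h.fibre_dvd_coord_symm_sub i)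
  have hden : T.symm.den ≠ 0 := den_ne_zero (T.det_symm.symm ▸ h.det_ne_zero)
  exact mul_ne_zero (mul_ne_zero (by simpa using h.ne_zero i) (X_ne_zero 1)) hden

end IsBasedAt

theorem den_pow_dvd_aeval_coord {m D : ℕ} {F : MvPolynomial (Fin 3) K} (hT : T.det ≠ 0)
    {p : Fin 3 → K} (h0 : p 0 = 0) (h1 : p 1 = 0) (h2 : p 2 ≠ 0) (hF : F.IsHomogeneous D)
    (hFp : F ∈ pointIdeal p ^ m) : T.den ^ m ∣ aeval T.coord F := by
  refine pow_dvd_aeval hFp hF (c := C (p 2)⁻¹ * T.num)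
    (mul_ne_zero (by simpa using h2) (num_ne_zero hT)) fun j => ?_
  rw [algebraMap_eq]
  fin_cases j
  · exact ⟨X 0, by simp [coord_zero, h0]⟩
  · exact ⟨X 1, by simp [coord_one, h1]⟩
  · have hC : C (p 2)⁻¹ * C (p 2) = (1 : MvPolynomial (Fin 3) K) := by
      rw [← C_mul, inv_mul_cancel₀ h2, C_1]
    refine ⟨0, ?_⟩
    simp only [Fin.reduceFinMk, coord_two]
    linear_combination -T.num * hC

theorem IsBasedAt.exists_lift_eq (h : T.IsBasedAt q) {δ s t : ℕ} {F : MvPolynomial (Fin 3) K}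
    (hF : F.IsHomogeneous ((2 * s + δ + t) * (k + 1) + δ)) {p : Fin 3 → K} (h0 : p 0 = 0)
    (h1 : p 1 = 0) (h2 : p 2 ≠ 0) (hFp : F ∈ pointIdeal p ^ ((2 * s + δ) * (k + 1) + t * k))
    (hFq : ∀ i, F ∈ pointIdeal (q i) ^ (s + δ + t)) :
    ∃ G : MvPolynomial (Fin 3) K, G.IsHomogeneous δ ∧ T.lift s t G = F := by
  have hden := den_pow_dvd_aeval_coord (T.det_symm.symm ▸ h.det_ne_zero) h0 h1 h2 hF hFp
  have hfibre : (∏ i, fibre (q i)) ^ (s + δ + t) ∣ aeval T.symm.coord F := by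
    rw [← Finset.prod_pow]
    exact Fintype.prod_dvd_of_isRelPrime
      (fun i j hij => (h.pairwise_isRelPrime_fibre hij).pow)
      fun i => h.fibre_pow_dvd_aeval_coord_symm hF (hFq i)
  have hrel : IsRelPrime T.symm.den (∏ i, fibre (q i)) :=
    IsRelPrime.prod_right fun i _ => (h.isRelPrime_fibre_den_symm i).symm
  have hdvd : T.symm.den ^ ((2 * s + δ) * (k + 1) + t * k) * T.det ^ (s + δ + t) ∣
      aeval T.symm.coord F :=
    (((h.associated_prod_fibre_det.pow_pow).mul_left _).dvd_iff_dvd_left).1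
      (hrel.pow.mul_dvd hden hfibre)
  have hdeg : (aeval T.symm.coord F).IsHomogeneous ((k + 1) * ((2 * s + δ) * (k + 1) + t * k) +
      2 * (k + 1) * (s + δ + t) + δ) := by
    convert hF.aeval _ T.symm.isHomogeneous_coord using 1
    ring
  obtain ⟨G, hG, hFG⟩ := exists_isHomogeneous_eq_mul hdeg
    ((T.symm.isHomogeneous_den.pow _).mul (T.isHomogeneous_det.pow _)) hdvd
  exact ⟨G, hG, (eq_lift_of_aeval_coord_symm_eq h.det_ne_zero hF hFG).symm⟩

end Field

end DeJonquieres

section LinearSystem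

/-- The multiplicities `(m₀, m, …, m)` of a quasi-homogeneous linear system on `n + 1` points. -/
def quasiHom (n m₀ m : ℕ) : Fin (n + 1) → ℕ := Fin.cons m₀ fun _ => m

variable {k : ℕ} {T : DeJonquieres ℂ k} {q : Fin (2 * (k + 1)) → Fin 3 → ℂ}

theorem DeJonquieres.IsBasedAt.finrank_linSys (h : T.IsBasedAt q) {p : Fin 3 → ℂ} (h0 : p 0 = 0)
    (h1 : p 1 = 0) (h2 : p 2 ≠ 0) (δ s t : ℕ) :
    Module.finrank ℂ (linSys (Fin.cons p q) ((2 * s + δ + t) * (k + 1) + δ)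
      (quasiHom (2 * (k + 1)) ((2 * s + δ) * (k + 1) + t * k) (s + δ + t))) =
      (δ + 2).choose 2 := by
  rw [← finrank_homogeneousSubmodule_fin_three ℂ]
  refine finrank_eq_of_map_eq (f := T.lift s t) (Submodule.ext fun F => ?_)
    fun G hG => eq_zero_of_lift_eq_zero h.det_ne_zero hG
  rw [mem_linSys, Fin.forall_fin_succ, Submodule.mem_map]
  simp only [quasiHom, Fin.cons_zero, Fin.cons_succ]
  constructor
  · rintro ⟨G, hG, rfl⟩
    exact ⟨isHomogeneous_lift hG, lift_mem_pointIdeal_pow_of_eq_zero h0 h1 hG,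
      fun i => lift_mem_pointIdeal_pow (h.eval_den i) (h.eval_num i) hG⟩
  · rintro ⟨hF, hFp, hFq⟩
    exact h.exists_lift_eq hF h0 h1 h2 hFp hFq

end LinearSystem

section Existence

section CommRing

variable {R S : Type*} [CommRing R] [CommRing S]

/-- The binary form `∑ α j x ^ j y ^ (n - j)` of degree `n`, where `l ≤ n + 1`. -/
noncomputable def binaryForm {l : ℕ} (n : ℕ) (α : Fin l → R) : MvPolynomial (Fin 2) R :=
  ∑ j : Fin l, C (α j) * (X 0 ^ (j : ℕ) * X 1 ^ (n - j))

theorem isHomogeneous_binaryForm {l n : ℕ} (hl : l ≤ n + 1) (α : Fin l → R) :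
    (binaryForm n α).IsHomogeneous n := by
  refine IsHomogeneous.sum _ _ _ fun j _ => IsHomogeneous.C_mul ?_ _
  convert (isHomogeneous_X_pow 0 (j : ℕ)).mul (isHomogeneous_X_pow (R := R) (1 : Fin 2) (n - j))
  omega

theorem eval_binaryForm {l : ℕ} (n : ℕ) (α : Fin l → R) (x : Fin 2 → R) :
    eval x (binaryForm n α) = ∑ j : Fin l, α j * (x 0 ^ (j : ℕ) * x 1 ^ (n - j)) := by
  simp [binaryForm]

theorem eval_binaryForm_one_zero {l n : ℕ} (hl : l ≤ n) (α : Fin l → R) :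
    eval ![1, 0] (binaryForm n α) = 0 := by
  rw [eval_binaryForm]
  refine Finset.sum_eq_zero fun j _ => ?_
  simp [show n - (j : ℕ) ≠ 0 by omega]

/-- The matrix of the linear conditions imposed by the points `q i` on the forms `a z + b`, where
`a` has degree `k` and no term `x ^ k`, and `b` has degree `k + 1`. -/
def conditionMatrix {ι : Type*} (k : ℕ) (q : ι → Fin 3 → R) :
    Matrix ι (Fin k ⊕ Fin (k + 2)) R :=
  Matrix.of fun i => Sum.elim (fun j => q i 0 ^ (j : ℕ) * q i 1 ^ (k - j) * q i 2)
    fun j => q i 0 ^ (j : ℕ) * q i 1 ^ (k + 1 - j)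

theorem conditionMatrix_map {ι : Type*} (φ : R →+* S) (k : ℕ) (q : ι → Fin 3 → R) :
    (conditionMatrix k q).map φ = conditionMatrix k fun i => φ ∘ q i := by
  ext i (j | j) <;> simp [conditionMatrix]

theorem conditionMatrix_mulVec {ι : Type*} (k : ℕ) (q : ι → Fin 3 → R)
    (v : Fin k ⊕ Fin (k + 2) → R) (i : ι) :
    (conditionMatrix k q).mulVec v i =
      eval (fun j : Fin 2 => q i j.castSucc) (binaryForm k (v ∘ Sum.inl)) * q i 2 +
        eval (fun j : Fin 2 => q i j.castSucc) (binaryForm (k + 1) (v ∘ Sum.inr)) := by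
  rw [eval_binaryForm, eval_binaryForm, Finset.sum_mul, Matrix.mulVec, dotProduct,
    Fintype.sum_sum_type]
  congr 1 <;> refine Finset.sum_congr rfl fun j _ => ?_
  · simp only [conditionMatrix, Matrix.of_apply, Sum.elim_inl, Function.comp_apply,
      Fin.castSucc_zero, Fin.castSucc_one]
    ring
  · simp only [conditionMatrix, Matrix.of_apply, Sum.elim_inr, Function.comp_apply,
      Fin.castSucc_zero, Fin.castSucc_one]
    ring

end CommRing

section Field

variable {K : Type*} [Field K] {k : ℕ}

theorem exists_binaryForm_eval_eq {q : Fin k ⊕ Fin (k + 2) → Fin 3 → K}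
    (hdet : (conditionMatrix k q).det ≠ 0) (w : Fin k ⊕ Fin (k + 2) → K) :
    ∃ (α : Fin k → K) (β : Fin (k + 2) → K), ∀ i,
      eval (fun j : Fin 2 => q i j.castSucc) (binaryForm k α) * q i 2 +
        eval (fun j : Fin 2 => q i j.castSucc) (binaryForm (k + 1) β) = w i := by
  obtain ⟨v, rfl⟩ := (Matrix.mulVec_surjective_iff_isUnit.2
    ((Matrix.isUnit_iff_isUnit_det _).2 hdet.isUnit)) w
  exact ⟨v ∘ Sum.inl, v ∘ Sum.inr, fun i => (conditionMatrix_mulVec k q v i).symm⟩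

theorem exists_deJonquieres_eval_eq_zero {q : Fin k ⊕ Fin (k + 2) → Fin 3 → K}
    (hdet : (conditionMatrix k q).det ≠ 0) (hq : ∀ i, q i 1 ≠ 0) :
    ∃ T : DeJonquieres K k, T.det ≠ 0 ∧
      ∀ i, eval (q i) T.den = 0 ∧ eval (q i) T.num = 0 := by
  obtain ⟨α, β, hden⟩ := exists_binaryForm_eval_eq hdet fun i => -(q i 0 ^ k * q i 2)
  obtain ⟨α', β', hnum⟩ := exists_binaryForm_eval_eq hdet fun i => -(q i 0 ^ (k + 2) / q i 1)
  have hX (i n) : (X i ^ n : MvPolynomial (Fin 2) K).IsHomogeneous n := isHomogeneous_X_pow i n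
  have hα (α : Fin k → K) := isHomogeneous_binaryForm k.le_succ α
  have hβ (β : Fin (k + 2) → K) := isHomogeneous_binaryForm (n := k + 1) le_rfl β
  refine ⟨⟨X 0 ^ k + binaryForm k α, binaryForm (k + 1) β, X 1 * binaryForm k α',
    X 0 ^ (k + 2) + X 1 * binaryForm (k + 1) β', (hX 0 k).add (hα α), hβ β, ?_, ?_⟩, ?_, ?_⟩
  · simpa only [add_comm 1] using (isHomogeneous_X K 1).mul (hα α')
  · exact (hX 0 (k + 2)).add (by
      convert (isHomogeneous_X K 1).mul (hβ β') using 1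
      ring)
  · have heval : eval ![1, 0, 0] (ternary (R := K)
        ((X 0 ^ k + binaryForm k α) * (X 0 ^ (k + 2) + X 1 * binaryForm (k + 1) β') -
          binaryForm (k + 1) β * (X 1 * binaryForm k α'))) = 1 := by
      have hx : (fun j : Fin 2 => (![1, 0, 0] : Fin 3 → K) j.castSucc) = ![1, 0] := by
        ext j
        fin_cases j <;> rfl
      simp [eval_ternary, hx, eval_binaryForm_one_zero]
    exact fun h0 => one_ne_zero (heval.symm.trans ((congrArg _ h0).trans (map_zero _)))
  · intro i
    simp only [DeJonquieres.den, DeJonquieres.num, map_add, map_mul, map_pow, eval_ternary, eval_X,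
      Fin.castSucc_zero, Fin.castSucc_one]
    constructor
    · linear_combination hden i
    · have := mul_div_cancel₀ (q i 0 ^ (k + 2)) (hq i)
      linear_combination q i 1 * hnum i - this

end Field

end Existence

section GeneralPosition

section CommRing

variable {R S : Type*} [CommRing R] [CommRing S] {k : ℕ}

/-- A change of coordinates moving the point `x` to a multiple of `(0 : 0 : 1)`. -/
def shear (x : Fin 3 → R) : Matrix (Fin 3) (Fin 3) R :=
  !![x 2, 0, -x 0; 0, x 2, -x 1; 0, 0, 1]

theorem shear_mulVec (x r : Fin 3 → R) :
    (shear x).mulVec r = ![x 2 * r 0 - x 0 * r 2, x 2 * r 1 - x 1 * r 2, r 2] := by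
  ext j
  fin_cases j <;> simp [shear, Matrix.mulVec, dotProduct, Fin.sum_univ_three, sub_eq_add_neg]

theorem det_shear (x : Fin 3 → R) : (shear x).det = x 2 ^ 2 := by
  simp [shear, Matrix.det_fin_three, sq]

/-- The points `p 1, …, p n` in coordinates in which `p 0` is a multiple of `(0 : 0 : 1)`. -/
def shearedTail {n : ℕ} (p : Fin (n + 1) → Fin 3 → R) (i : Fin n) : Fin 3 → R :=
  (shear (p 0)).mulVec (p i.succ)

theorem comp_shearedTail {n : ℕ} (φ : R →+* S) (p : Fin (n + 1) → Fin 3 → R) (i : Fin n) :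
    φ ∘ shearedTail p i = shearedTail (fun i => φ ∘ p i) i := by
  ext j
  fin_cases j <;> simp [shearedTail, shear_mulVec]

/-- The splitting of the `2 (k + 1)` points according to the block form of `conditionMatrix`. -/
def blockEquiv (k : ℕ) : Fin k ⊕ Fin (k + 2) ≃ Fin (2 * (k + 1)) :=
  finSumFinEquiv.trans (finCongr (by ring))

/-- A polynomial in the coordinates of the points `p i` whose nonvanishing guarantees that there is
a de Jonquières transformation with a `(k + 1)`-fold base point at `p 0` and the other `p i`, on
distinct lines through `p 0`, as its simple base points. -/
noncomputable def discriminant (k : ℕ) (p : Fin (2 * (k + 1) + 1) → Fin 3 → R) : R :=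
  p 0 2 * (∏ i, shearedTail p i 1) *
    (∏ x ∈ (Finset.univ : Finset (Fin (2 * (k + 1)))).offDiag,
      (shearedTail p x.1 0 * shearedTail p x.2 1 - shearedTail p x.2 0 * shearedTail p x.1 1)) *
    (conditionMatrix k (shearedTail p ∘ blockEquiv k)).det

theorem map_discriminant (φ : R →+* S) (p : Fin (2 * (k + 1) + 1) → Fin 3 → R) :
    φ (discriminant k p) = discriminant k fun i => φ ∘ p i := by
  have hφ (i j) : φ (shearedTail p i j) = shearedTail (fun i => φ ∘ p i) i j :=
    congrFun (comp_shearedTail φ p i) j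
  simp only [discriminant, map_mul, map_sub, map_prod, φ.map_det, RingHom.mapMatrix_apply,
    conditionMatrix_map, Function.comp_apply, Function.comp_def, hφ]

end CommRing

section Field

variable {K : Type*} [Field K] {k : ℕ}

theorem exists_isBasedAt_shearedTail {p : Fin (2 * (k + 1) + 1) → Fin 3 → K}
    (h : discriminant k p ≠ 0) : ∃ T : DeJonquieres K k, T.IsBasedAt (shearedTail p) := by
  simp only [discriminant, mul_ne_zero_iff, Finset.prod_ne_zero_iff] at h
  obtain ⟨⟨⟨-, hne⟩, hpair⟩, hdet⟩ := h
  obtain ⟨T, hT, hq⟩ := exists_deJonquieres_eval_eq_zero hdet fun i => hne _ (Finset.mem_univ _)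
  have hq' : ∀ i, eval (shearedTail p i) T.den = 0 ∧ eval (shearedTail p i) T.num = 0 :=
    (blockEquiv k).surjective.forall.2 hq
  exact ⟨T, hT, fun i => (hq' i).1, fun i => (hq' i).2, fun i => hne i (Finset.mem_univ i),
    fun i j hij => hpair (i, j) (by simpa using hij)⟩

theorem det_conditionMatrix_ne_zero {s : Fin k ⊕ Fin (k + 2) → K} (hs : Function.Injective s) :
    (conditionMatrix k fun i => ![s i, 1, i.elim (fun _ => 1) fun _ => 0]).det ≠ 0 := by
  set M := conditionMatrix k fun i => ![s i, 1, i.elim (fun _ => 1) fun _ => 0]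
  have hM : M = Matrix.fromBlocks (Matrix.vandermonde (s ∘ Sum.inl)) M.toBlocks₁₂ 0
      (Matrix.vandermonde (s ∘ Sum.inr)) := by
    ext (i | i) (j | j) <;> simp [M, conditionMatrix, Matrix.vandermonde_apply, Matrix.toBlocks₁₂]
  rw [hM, Matrix.det_fromBlocks_zero₂₁]
  exact mul_ne_zero (Matrix.det_vandermonde_ne_zero_iff.2 (hs.comp Sum.inl_injective))
    (Matrix.det_vandermonde_ne_zero_iff.2 (hs.comp Sum.inr_injective))

theorem exists_discriminant_ne_zero (K : Type*) [Field K] [CharZero K] (k : ℕ) :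
    ∃ p : Fin (2 * (k + 1) + 1) → Fin 3 → K, discriminant k p ≠ 0 := by
  let q (i : Fin (2 * (k + 1))) : Fin 3 → K :=
    ![((i : ℕ) : K), 1, ((blockEquiv k).symm i).elim (fun _ => 1) fun _ => 0]
  let p : Fin (2 * (k + 1) + 1) → Fin 3 → K := Fin.cons ![0, 0, 1] q
  have hp : shearedTail p = q := by
    ext i j
    fin_cases j <;> simp [shearedTail, shear_mulVec, p, q]
  have hs : Function.Injective fun i => ((blockEquiv k i : ℕ) : K) :=
    Nat.cast_injective.comp (Fin.val_injective.comp (blockEquiv k).injective)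
  refine ⟨p, mul_ne_zero (mul_ne_zero (mul_ne_zero ?_ ?_) ?_) ?_⟩
  · simp [p]
  · simp [hp, q]
  · refine Finset.prod_ne_zero_iff.2 fun x hx => ?_
    simpa [hp, q, sub_eq_zero, Fin.ext_iff] using hx
  · simpa [hp, q, Function.comp_def] using det_conditionMatrix_ne_zero hs

end Field

theorem generically_discriminant_ne_zero (k : ℕ) :
    Generically (2 * (k + 1) + 1) fun p => discriminant k p ≠ 0 := by
  have hmap (p : Fin (2 * (k + 1) + 1) → Fin 3 → ℂ) :
      eval (fun x => p x.1 x.2) (discriminant k fun i j => X (i, j)) = discriminant k p := by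
    simp only [map_discriminant, Function.comp_def, eval_X]
  obtain ⟨p, hp⟩ := exists_discriminant_ne_zero ℂ k
  refine ⟨discriminant k fun i j => X (i, j), fun h0 => hp ?_, fun p _ hp => by rwa [hmap] at hp⟩
  rw [← hmap, h0, map_zero]

theorem Generically.mono {n : ℕ} {P Q : (Fin n → Fin 3 → ℂ) → Prop} (hP : Generically n P)
    (h : ∀ p, P p → Q p) : Generically n Q :=
  let ⟨D, hD, hDP⟩ := hP
  ⟨D, hD, fun p hp0 hp => h p (hDP p hp0 hp)⟩

theorem finrank_linSys_quasiHom {k : ℕ} {p : Fin (2 * (k + 1) + 1) → Fin 3 → ℂ}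
    (h : discriminant k p ≠ 0) (s δ t : ℕ) :
    Module.finrank ℂ (linSys p ((2 * s + δ + t) * (k + 1) + δ)
      (quasiHom (2 * (k + 1)) ((2 * s + δ) * (k + 1) + t * k) (s + δ + t))) =
      (δ + 2).choose 2 := by
  obtain ⟨T, hT⟩ := exists_isBasedAt_shearedTail h
  have hp0 : p 0 2 ≠ 0 := fun h0 => h (by simp [discriminant, h0])
  have hdet : (shear (p 0)).det ≠ 0 := det_shear (p 0) ▸ pow_ne_zero 2 hp0
  have hcons : (fun i => (shear (p 0)).mulVec (p i)) =
      Fin.cons ((shear (p 0)).mulVec (p 0)) (shearedTail p) :=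
    (Fin.cons_self_tail _).symm
  rw [← finrank_linSys_mulVec hdet, hcons]
  refine hT.finrank_linSys ?_ ?_ ?_ δ s t
  · simp [shear_mulVec, mul_comm]
  · simp [shear_mulVec, mul_comm]
  · simpa [shear_mulVec] using hp0

end GeneralPosition

section VirtualDimension

theorem two_mul_choose_two (n : ℕ) : (2 * n.choose 2 : ℤ) = n * (n - 1) := by
  have h : (2 * n.choose 2 : ℚ) = n * (n - 1) := by
    rw [Nat.cast_choose_two]
    ring
  exact_mod_cast h

theorem two_mul_virtDim {n : ℕ} (d : ℕ) (m : Fin n → ℕ) :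
    2 * virtDim d m = d * (d + 3) - ∑ i, (m i * (m i + 1) : ℤ) := by
  have heven (m : ℕ) : 2 ∣ (m * (m + 1) : ℤ) := (Int.even_mul_succ_self m).two_dvd
  have hd : 2 ∣ (d * (d + 3) : ℤ) := by
    rw [show (d * (d + 3) : ℤ) = d * (d + 1) + 2 * d by ring]
    exact dvd_add (heven d) (dvd_mul_right 2 _)
  rw [virtDim, mul_sub, Int.mul_ediv_cancel' hd, Finset.mul_sum]
  simp only [Int.mul_ediv_cancel' (heven _)]

theorem virtDim_quasiHom (k s δ t : ℕ) :
    virtDim ((2 * s + δ + t) * (k + 1) + δ)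
      (quasiHom (2 * (k + 1)) ((2 * s + δ) * (k + 1) + t * k) (s + δ + t)) =
      ((δ + 2).choose 2 : ℤ) - 1 - (2 * (k + 1) * s.choose 2 + t.choose 2) := by
  have h := two_mul_virtDim ((2 * s + δ + t) * (k + 1) + δ)
    (quasiHom (2 * (k + 1)) ((2 * s + δ) * (k + 1) + t * k) (s + δ + t))
  simp only [quasiHom, Fin.sum_univ_succ, Fin.cons_zero, Fin.cons_succ, Finset.sum_const,
    Finset.card_univ, Fintype.card_fin, nsmul_eq_mul] at h
  have hδ := two_mul_choose_two (δ + 2)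
  push_cast at h hδ
  rw [quasiHom]
  linarith [congrArg (2 * ((k : ℤ) + 1) * ·) (two_mul_choose_two s), two_mul_choose_two t]

theorem qh_eq_quasiHom (n m₀ : ℕ) : qh n m₀ = quasiHom n m₀ 6 := by
  ext i
  cases i using Fin.cases <;> simp [qh, quasiHom]

end VirtualDimension

theorem special_L_9e_families_general {e : ℕ} (he : 1 ≤ e) :
    (∀ s δ t : ℕ, virtDim ((2 * s + δ + t) * e + δ)
      (quasiHom (2 * e) ((2 * s + δ + t) * e - t) (s + δ + t)) =
        ((δ + 2).choose 2 : ℤ) - 1 - (2 * e * s.choose 2 + t.choose 2)) ∧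
    Generically (2 * e + 1) fun p => ∀ s δ t : ℕ,
      projDim p ((2 * s + δ + t) * e + δ)
        (quasiHom (2 * e) ((2 * s + δ + t) * e - t) (s + δ + t)) = ((δ + 2).choose 2 : ℤ) - 1 ∧
      (projDim p ((2 * s + δ + t) * e + δ)
          (quasiHom (2 * e) ((2 * s + δ + t) * e - t) (s + δ + t)) >
        max (-1) (virtDim ((2 * s + δ + t) * e + δ)
          (quasiHom (2 * e) ((2 * s + δ + t) * e - t) (s + δ + t))) ↔ 2 ≤ s ∨ 2 ≤ t) := by
  obtain ⟨k, rfl⟩ := Nat.exists_eq_add_of_le' he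
  have hm₀ (s δ t : ℕ) :
      (2 * s + δ + t) * (k + 1) - t = (2 * s + δ) * (k + 1) + t * k :=
    Nat.sub_eq_of_eq_add (by ring)
  simp only [hm₀]
  refine ⟨fun s δ t => mod_cast virtDim_quasiHom k s δ t,
    (generically_discriminant_ne_zero k).mono fun p hp s δ t => ?_⟩
  rw [virtDim_quasiHom, projDim, finrank_linSys_quasiHom hp]
  refine ⟨rfl, ?_⟩
  have hδ : 0 < (δ + 2).choose 2 := Nat.choose_pos (Nat.le_add_left 2 δ)
  have hst : 0 < 2 * (k + 1) * s.choose 2 + t.choose 2 ↔ 2 ≤ s ∨ 2 ≤ t := by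
    rw [Nat.add_pos_iff_pos_or_pos, Nat.mul_pos_iff_of_pos_left (by positivity)]
    simp only [Nat.pos_iff_ne_zero, Nat.choose_ne_zero_iff]
  rw [gt_iff_lt, max_lt_iff, ← hst]
  zify
  constructor
  · rintro ⟨-, h⟩
    linarith
  · exact fun h => ⟨by linarith, by linarith⟩

theorem special_L_9e_families (e : ℕ) (he : 1 ≤ e) :
    virtDim (9 * e) (qh (2 * e) (9 * e - 3)) = -6 * (e : ℤ) - 3 ∧
    virtDim (9 * e + 1) (qh (2 * e) (9 * e - 2)) = -6 * (e : ℤ) + 1 ∧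
    Generically (2 * e + 1) (fun p =>
      (projDim p (9 * e) (qh (2 * e) (9 * e - 3)) = 0 ∧
        projDim p (9 * e) (qh (2 * e) (9 * e - 3)) >
          max (-1) (virtDim (9 * e) (qh (2 * e) (9 * e - 3)))) ∧
      (projDim p (9 * e + 1) (qh (2 * e) (9 * e - 2)) = 2 ∧
        projDim p (9 * e + 1) (qh (2 * e) (9 * e - 2)) >
          max (-1) (virtDim (9 * e + 1) (qh (2 * e) (9 * e - 2))))) := by
  obtain ⟨hvirt, hgen⟩ := special_L_9e_families_general he
  simp only [qh_eq_quasiHom]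
  refine ⟨(hvirt 3 0 3).trans ?_, (hvirt 3 1 2).trans ?_, hgen.mono fun p hp => ?_⟩
  · simp only [Nat.choose]
    push_cast
    ring
  · simp only [Nat.choose]
    push_cast
    ring
  · obtain ⟨h₁, hs₁⟩ := hp 3 0 3
    obtain ⟨h₂, hs₂⟩ := hp 3 1 2
    exact ⟨⟨h₁, hs₁.2 (by norm_num)⟩, h₂, hs₂.2 (by norm_num)⟩
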